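/- Assume (Ω, Γ, Σ₀) satisfies the flow-covering condition with time T > 0, and assume in addition that every characteristic meets Γ only at its initial point: for every s ≥ 0 and every differentiable curve γ : [0, s] → closure(Ω) with γ(0) ∈ Γ and γ'(r) = Σ₀(γ(r)) for all r ∈ [0, s], one has γ(r) ∉ Γ for all r ∈ (0, s]. Let σ₀ and h be continuous real-valued functions on closure(Ω). Then there exists a unique function v : Ω ∪ Γ → ℝ such that v vanishes at every point of Γ and such that for every s ≥ 0 and every differentiable curve γ : [0, s] → closure(Ω) with γ(0) ∈ Γ, γ'(r) = Σ₀(γ(r)) for all r ∈ [0, s], and γ(s) ∈ Ω ∪ Γ, one has v(γ(s)) = ∫₀ˢ exp(−∫ᵣˢ σ₀(γ(u)) du) · h(γ(r)) dr. -/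

import Mathlib

/-!
The Duhamel integral along a characteristic depends only on its endpoint. Indeed, let two
characteristics issued from `Γ` end at the same point after times `s₁ ≤ s₂`. After translating the
second one in time by `s₂ - s₁`, backward uniqueness for the Lipschitz field `S₀` shows that they
agree (`IsCharacteristic.eq_shift`), so the second one sits on `Γ` at time `s₂ - s₁`. As
characteristics meet `Γ` only initially, `s₁ = s₂` and the curves agree (`IsCharacteristic.unique`).

Hence `v` may be defined at an endpoint by the Duhamel integral of any characteristic ending there.
It vanishes on `Γ` since a characteristic ending on `Γ` has duration `0`. Uniqueness of `v` holds
because the flow-covering condition provides a characteristic ending at each point of `Ω`.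
-/

/-- The triple `(Ω, Γ, S₀)` satisfies the flow-covering condition with time `T`. -/
def FlowCovering {n : ℕ} (Ω Γ : Set (EuclideanSpace ℝ (Fin n)))
    (S₀ : EuclideanSpace ℝ (Fin n) → EuclideanSpace ℝ (Fin n)) (T : ℝ) : Prop :=
  ∀ x ∈ Ω, ∃ s ∈ Set.Icc (0 : ℝ) T, ∃ γ : ℝ → EuclideanSpace ℝ (Fin n),
    (∀ r ∈ Set.Icc (0 : ℝ) s, γ r ∈ closure Ω) ∧ γ 0 ∈ Γ ∧ γ s = x ∧
    ∀ r ∈ Set.Icc (0 : ℝ) s, HasDerivAt γ (S₀ (γ r)) r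

/-- `γ`, restricted to `[0, s]`, is a characteristic of `S₀` issued from `Γ` and staying in
`closure Ω`. As in `FlowCovering`, the derivative is two-sided, also at the ends of `[0, s]`. -/
structure IsCharacteristic {n : ℕ} (Ω Γ : Set (EuclideanSpace ℝ (Fin n)))
    (S₀ : EuclideanSpace ℝ (Fin n) → EuclideanSpace ℝ (Fin n)) (s : ℝ)
    (γ : ℝ → EuclideanSpace ℝ (Fin n)) : Prop where
  nonneg : 0 ≤ s
  mem_closure : ∀ r ∈ Set.Icc (0 : ℝ) s, γ r ∈ closure Ω
  start_mem : γ 0 ∈ Γ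
  hasDerivAt : ∀ r ∈ Set.Icc (0 : ℝ) s, HasDerivAt γ (S₀ (γ r)) r

/-- The Duhamel integral of the source `h`, damped by `σ₀`, along the curve `γ` up to time `s`. -/
noncomputable def duhamel {n : ℕ} (σ₀ h : EuclideanSpace ℝ (Fin n) → ℝ) (s : ℝ)
    (γ : ℝ → EuclideanSpace ℝ (Fin n)) : ℝ :=
  ∫ r in (0 : ℝ)..s, Real.exp (-(∫ u in r..s, σ₀ (γ u))) * h (γ r)

theorem duhamel_zero {n : ℕ} (σ₀ h : EuclideanSpace ℝ (Fin n) → ℝ)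
    (γ : ℝ → EuclideanSpace ℝ (Fin n)) : duhamel σ₀ h 0 γ = 0 :=
  intervalIntegral.integral_same

theorem duhamel_congr {n : ℕ} (σ₀ h : EuclideanSpace ℝ (Fin n) → ℝ) {s : ℝ}
    {γ₁ γ₂ : ℝ → EuclideanSpace ℝ (Fin n)} (hs : 0 ≤ s) (heq : Set.EqOn γ₁ γ₂ (Set.Icc 0 s)) :
    duhamel σ₀ h s γ₁ = duhamel σ₀ h s γ₂ := by
  refine intervalIntegral.integral_congr fun r hr => ?_
  rw [Set.uIcc_of_le hs] at hr
  have hinner : ∫ u in r..s, σ₀ (γ₁ u) = ∫ u in r..s, σ₀ (γ₂ u) := by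
    refine intervalIntegral.integral_congr fun u hu => ?_
    rw [Set.uIcc_of_le hr.2] at hu
    exact congrArg σ₀ (heq ⟨hr.1.trans hu.1, hu.2⟩)
  simp only [hinner, heq hr]

namespace IsCharacteristic

variable {n : ℕ} {Ω Γ : Set (EuclideanSpace ℝ (Fin n))}
  {S₀ : EuclideanSpace ℝ (Fin n) → EuclideanSpace ℝ (Fin n)} {L : NNReal} {s₁ s₂ : ℝ}
  {γ₁ γ₂ : ℝ → EuclideanSpace ℝ (Fin n)}

/-- Backward uniqueness: characteristics with a common endpoint agree up to a time shift, for as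
long as the shorter one lasts. -/
theorem eq_shift (hLip : LipschitzWith L S₀) (h₁ : IsCharacteristic Ω Γ S₀ s₁ γ₁)
    (h₂ : IsCharacteristic Ω Γ S₀ s₂ γ₂) (hle : s₁ ≤ s₂) (hend : γ₁ s₁ = γ₂ s₂) :
    Set.EqOn γ₁ (fun r => γ₂ (r + (s₂ - s₁))) (Set.Icc 0 s₁) := by
  have hd : ∀ r ∈ Set.Icc 0 s₁,
      HasDerivAt (fun r => γ₂ (r + (s₂ - s₁))) (S₀ (γ₂ (r + (s₂ - s₁)))) r := fun r hr =>
    (h₂.hasDerivAt _ ⟨by linarith [hr.1], by linarith [hr.2]⟩).comp_add_const r (s₂ - s₁)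
  refine ODE_solution_unique_of_mem_Icc_left (v := fun _ => S₀) (s := fun _ => Set.univ) (K := L)
    (fun _ _ => hLip.lipschitzOnWith)
    (fun r hr => (h₁.hasDerivAt r hr).continuousAt.continuousWithinAt)
    (fun r hr => (h₁.hasDerivAt r (Set.Ioc_subset_Icc_self hr)).hasDerivWithinAt)
    (fun _ _ => Set.mem_univ _)
    (fun r hr => (hd r hr).continuousAt.continuousWithinAt)
    (fun r hr => (hd r (Set.Ioc_subset_Icc_self hr)).hasDerivWithinAt)
    (fun _ _ => Set.mem_univ _) ?_
  simpa using hend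

/-- If characteristics meet `Γ` only at their initial point, then the endpoint determines both the
duration and the curve. -/
theorem unique (hLip : LipschitzWith L S₀)
    (hmeet : ∀ s γ, IsCharacteristic Ω Γ S₀ s γ → ∀ r ∈ Set.Ioc (0 : ℝ) s, γ r ∉ Γ)
    (h₁ : IsCharacteristic Ω Γ S₀ s₁ γ₁) (h₂ : IsCharacteristic Ω Γ S₀ s₂ γ₂)
    (hend : γ₁ s₁ = γ₂ s₂) : s₁ = s₂ ∧ Set.EqOn γ₁ γ₂ (Set.Icc 0 s₁) := by
  wlog hle : s₁ ≤ s₂ generalizing s₁ s₂ γ₁ γ₂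
  · obtain ⟨rfl, heq⟩ := this h₂ h₁ hend.symm (not_le.1 hle).le
    exact ⟨rfl, heq.symm⟩
  have heq := eq_shift hLip h₁ h₂ hle hend
  have h0 : γ₁ 0 = γ₂ (s₂ - s₁) := by
    simpa using heq (Set.left_mem_Icc.2 h₁.nonneg)
  obtain rfl : s₁ = s₂ := by
    refine hle.antisymm (not_lt.1 fun hlt => ?_)
    exact hmeet s₂ γ₂ h₂ (s₂ - s₁) ⟨sub_pos.2 hlt, by linarith [h₁.nonneg]⟩ (h0 ▸ h₁.start_mem)
  exact ⟨rfl, by simpa using heq⟩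

end IsCharacteristic

/-- Method-of-characteristics solution of the transport problem
`S₀·∇v + σ₀ v = h` in `Ω` with `v = 0` on `Γ` (surjectivity part of Lemma 4.2):
there is a unique function on `Ω ∪ Γ`, vanishing on `Γ`, whose value at the
endpoint of any characteristic issued from `Γ` is given by the Duhamel formula. -/
theorem transport_characteristics_existence_uniqueness
    (n : ℕ) (Ω Γ : Set (EuclideanSpace ℝ (Fin n)))
    (S₀ : EuclideanSpace ℝ (Fin n) → EuclideanSpace ℝ (Fin n))
    (L : NNReal) (T : ℝ)
    (hΩo : IsOpen Ω) (hΩb : Bornology.IsBounded Ω) (hΓ : Γ ⊆ frontier Ω)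
    (hLip : LipschitzWith L S₀) (hT : 0 < T)
    (hflow : FlowCovering Ω Γ S₀ T)
    (hmeet : ∀ s : ℝ, 0 ≤ s → ∀ γ : ℝ → EuclideanSpace ℝ (Fin n),
      (∀ r ∈ Set.Icc (0 : ℝ) s, γ r ∈ closure Ω) → γ 0 ∈ Γ →
      (∀ r ∈ Set.Icc (0 : ℝ) s, HasDerivAt γ (S₀ (γ r)) r) →
      ∀ r ∈ Set.Ioc (0 : ℝ) s, γ r ∉ Γ)
    (σ₀ h : EuclideanSpace ℝ (Fin n) → ℝ)
    (hσ₀ : ContinuousOn σ₀ (closure Ω)) (hh : ContinuousOn h (closure Ω)) :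
    ∃ v : EuclideanSpace ℝ (Fin n) → ℝ,
      ((∀ y ∈ Γ, v y = 0) ∧
        ∀ s : ℝ, 0 ≤ s → ∀ γ : ℝ → EuclideanSpace ℝ (Fin n),
          (∀ r ∈ Set.Icc (0 : ℝ) s, γ r ∈ closure Ω) → γ 0 ∈ Γ →
          (∀ r ∈ Set.Icc (0 : ℝ) s, HasDerivAt γ (S₀ (γ r)) r) →
          γ s ∈ Ω ∪ Γ →
          v (γ s) = ∫ r in (0 : ℝ)..s,
            Real.exp (-(∫ u in r..s, σ₀ (γ u))) * h (γ r)) ∧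
      ∀ v' : EuclideanSpace ℝ (Fin n) → ℝ,
        ((∀ y ∈ Γ, v' y = 0) ∧
          ∀ s : ℝ, 0 ≤ s → ∀ γ : ℝ → EuclideanSpace ℝ (Fin n),
            (∀ r ∈ Set.Icc (0 : ℝ) s, γ r ∈ closure Ω) → γ 0 ∈ Γ →
            (∀ r ∈ Set.Icc (0 : ℝ) s, HasDerivAt γ (S₀ (γ r)) r) →
            γ s ∈ Ω ∪ Γ →
            v' (γ s) = ∫ r in (0 : ℝ)..s,
              Real.exp (-(∫ u in r..s, σ₀ (γ u))) * h (γ r)) →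
        ∀ x ∈ Ω ∪ Γ, v' x = v x := by
  classical
  have hmeet' : ∀ s γ, IsCharacteristic Ω Γ S₀ s γ → ∀ r ∈ Set.Ioc (0 : ℝ) s, γ r ∉ Γ :=
    fun s γ hγ => hmeet s hγ.nonneg γ hγ.mem_closure hγ.start_mem hγ.hasDerivAt
  -- Points of `Γ` that are not endpoints get their boundary value from the default `0`.
  let v : EuclideanSpace ℝ (Fin n) → ℝ := fun x =>
    if hx : ∃ p : ℝ × (ℝ → EuclideanSpace ℝ (Fin n)), IsCharacteristic Ω Γ S₀ p.1 p.2 ∧ p.2 p.1 = x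
    then duhamel σ₀ h hx.choose.1 hx.choose.2 else 0
  have hv : ∀ s γ, IsCharacteristic Ω Γ S₀ s γ → v (γ s) = duhamel σ₀ h s γ := by
    intro s γ hγ
    have hx : ∃ p : ℝ × (ℝ → EuclideanSpace ℝ (Fin n)),
        IsCharacteristic Ω Γ S₀ p.1 p.2 ∧ p.2 p.1 = γ s := ⟨(s, γ), hγ, rfl⟩
    obtain ⟨hchar, hend⟩ := hx.choose_spec
    obtain ⟨hs, heq⟩ := IsCharacteristic.unique hLip hmeet' hchar hγ hend
    have hval : v (γ s) = duhamel σ₀ h hx.choose.1 hx.choose.2 := dif_pos hx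
    rw [hval, duhamel_congr σ₀ h hchar.nonneg heq, hs]
  have hvΓ : ∀ y ∈ Γ, v y = 0 := by
    intro y hy
    by_cases hx : ∃ p : ℝ × (ℝ → EuclideanSpace ℝ (Fin n)),
        IsCharacteristic Ω Γ S₀ p.1 p.2 ∧ p.2 p.1 = y
    · obtain ⟨⟨s, γ⟩, hγ, rfl⟩ := hx
      -- A characteristic ending on `Γ` cannot have positive duration.
      obtain rfl : s = 0 := le_antisymm
        (not_lt.1 fun hlt => hmeet' s γ hγ s ⟨hlt, le_rfl⟩ hy) hγ.nonneg
      exact (hv 0 γ hγ).trans (duhamel_zero σ₀ h γ)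
    · exact dif_neg hx
  refine ⟨v, ⟨hvΓ, fun s hs γ hcl h0 hd _ => hv s γ ⟨hs, hcl, h0, hd⟩⟩, ?_⟩
  rintro v' ⟨hv'Γ, hv'⟩ x (hxΩ | hxΓ)
  · obtain ⟨s, hs, γ, hcl, h0, rfl, hd⟩ := hflow x hxΩ
    exact (hv' s hs.1 γ hcl h0 hd (Or.inl hxΩ)).trans (hv s γ ⟨hs.1, hcl, h0, hd⟩).symm
  · rw [hv'Γ x hxΓ, hvΓ x hxΓ]
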